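/- Let (z^k)_{k∈ℕ} be a sequence in ℝ₊^{4N} with lim_{k→∞} V(z^k) = 0, let W > 0, and let i ∈ {1,…,4N} be an index such that z^k_i ≥ W for all k ∈ ℕ. Then lim_{k→∞} ∇_i D(z^k) = 0. -/

import Mathlib

open Matrix

noncomputable section

/-- Euclidean norm of a vector in ℝ^{4N}, represented as four blocks of ℝ^N. -/
def enorm4 {N : ℕ} (w : Fin 4 → Fin N → ℝ) : ℝ :=
  Real.sqrt (∑ b, ∑ i, w b i ^ 2)

/-- sign(x) = 1 if x ≥ 0 and −1 if x < 0. -/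
def sgn (x : ℝ) : ℝ := if 0 ≤ x then 1 else -1

/-- The (linearized) voltage map v(q) = A q + d. -/
def volt {N : ℕ} (A : Matrix (Fin N) (Fin N) ℝ) (d : Fin N → ℝ) (q : Fin N → ℝ) :
    Fin N → ℝ :=
  A *ᵥ q + d

/-- q(z) = λ^min − λ^max + A⁻¹(μ^min − μ^max). -/
def qOf {N : ℕ} (A : Matrix (Fin N) (Fin N) ℝ) (z : Fin 4 → Fin N → ℝ) : Fin N → ℝ :=
  z 0 - z 1 + A⁻¹ *ᵥ (z 2 - z 3)

/-- ∇D(z) = (v^min − v(q(z)), v(q(z)) − v^max, q^min − q(z), q(z) − q^max). -/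
def gradD {N : ℕ} (A : Matrix (Fin N) (Fin N) ℝ) (d vmin vmax qmin qmax : Fin N → ℝ)
    (z : Fin 4 → Fin N → ℝ) : Fin 4 → Fin N → ℝ :=
  ![vmin - volt A d (qOf A z), volt A d (qOf A z) - vmax,
    qmin - qOf A z, qOf A z - qmax]

/-- V(z) = ‖z − ⌈z + ∇D(z)⌉₊‖. -/
def Vfun {N : ℕ} (A : Matrix (Fin N) (Fin N) ℝ) (d vmin vmax qmin qmax : Fin N → ℝ)
    (z : Fin 4 → Fin N → ℝ) : ℝ :=
  enorm4 (fun b i => z b i - max (z b i + gradD A d vmin vmax qmin qmax z b i) 0)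

/-- The Lagrangian dual function
D(z) = inf_q [ (1/2) qᵀAq + (λ^min)ᵀ(v^min − v(q)) + (λ^max)ᵀ(v(q) − v^max)
  + (μ^min)ᵀ(q^min − q) + (μ^max)ᵀ(q − q^max) ]. -/
def dualFun {N : ℕ} (A : Matrix (Fin N) (Fin N) ℝ) (d vmin vmax qmin qmax : Fin N → ℝ)
    (z : Fin 4 → Fin N → ℝ) : ℝ :=
  ⨅ q : Fin N → ℝ,
    ((1 / 2) * (q ⬝ᵥ A *ᵥ q) + (z 0) ⬝ᵥ (vmin - volt A d q)
      + (z 1) ⬝ᵥ (volt A d q - vmax) + (z 2) ⬝ᵥ (qmin - q) + (z 3) ⬝ᵥ (q - qmax))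

/-- fes(q) = Euclidean distance from (q, v(q)) to the box [q^min,q^max] × [v^min,v^max]. -/
def fes {N : ℕ} (A : Matrix (Fin N) (Fin N) ℝ) (d vmin vmax qmin qmax : Fin N → ℝ)
    (q : Fin N → ℝ) : ℝ :=
  sInf { r : ℝ | ∃ y1 y2 : Fin N → ℝ,
    (∀ i, qmin i ≤ y1 i ∧ y1 i ≤ qmax i) ∧ (∀ i, vmin i ≤ y2 i ∧ y2 i ≤ vmax i) ∧
    r = Real.sqrt ((∑ i, (q i - y1 i) ^ 2) + ∑ i, (volt A d q i - y2 i) ^ 2) }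

/-- Each coordinate is bounded in absolute value by the Euclidean norm. -/
theorem abs_le_enorm4 {N : ℕ} (w : Fin 4 → Fin N → ℝ) (b : Fin 4) (i : Fin N) :
    |w b i| ≤ enorm4 w := by
  refine Real.abs_le_sqrt ?_
  calc w b i ^ 2 ≤ ∑ j, w b j ^ 2 :=
        Finset.single_le_sum (f := fun j => w b j ^ 2) (fun _ _ => sq_nonneg _)
          (Finset.mem_univ i)
    _ ≤ ∑ c, ∑ j, w c j ^ 2 :=
        Finset.single_le_sum (f := fun c => ∑ j, w c j ^ 2)
          (fun _ _ => Finset.sum_nonneg fun _ _ => sq_nonneg _) (Finset.mem_univ b)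

/-- If the projected step moves `x` by less than `x`, the projection is inactive. -/
theorem sub_max_add_zero_eq_neg {x g : ℝ} (h : |x - max (x + g) 0| < x) :
    x - max (x + g) 0 = -g := by
  rcases le_total 0 (x + g) with hg | hg
  · rw [max_eq_left hg]
    ring
  · rw [max_eq_right hg, sub_zero] at h
    exact absurd h (not_lt.mpr (le_abs_self x))

/-- Claim 2: if (z^k) ⊆ ℝ₊^{4N} with V(z^k) → 0, W > 0, and the i-th coordinate (here the
coordinate (b, i) of the four-block representation) satisfies z^k_i ≥ W for all k, then
∇_i D(z^k) → 0. -/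
theorem stmt_19 (N : ℕ) (hN : 0 < N) (A : Matrix (Fin N) (Fin N) ℝ) (hA : A.PosDef)
    (d vmin vmax qmin qmax : Fin N → ℝ)
    (hv : ∀ i, vmin i ≤ vmax i) (hq : ∀ i, qmin i ≤ qmax i)
    (zk : ℕ → Fin 4 → Fin N → ℝ) (hzk : ∀ k b i, 0 ≤ zk k b i)
    (hV : Filter.Tendsto (fun k => Vfun A d vmin vmax qmin qmax (zk k))
      Filter.atTop (nhds 0))
    (W : ℝ) (hW : 0 < W)
    (b : Fin 4) (i : Fin N) (hi : ∀ k, W ≤ zk k b i) :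
    Filter.Tendsto (fun k => gradD A d vmin vmax qmin qmax (zk k) b i)
      Filter.atTop (nhds 0) := by
  refine squeeze_zero_norm' ?_ hV
  filter_upwards [hV.eventually_lt_const hW] with k hk
  have hle := abs_le_enorm4 (fun b i => zk k b i -
    max (zk k b i + gradD A d vmin vmax qmin qmax (zk k) b i) 0) b i
  have hlt := (hle.trans_lt hk).trans_le (hi k)
  simp only [sub_max_add_zero_eq_neg hlt, abs_neg] at hle
  exact hle

end
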